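/- Let J : (0, r] → ℝ be a nonnegative function satisfying, for all r₁ with r₁ ≤ t ≤ (4/3)r₁ ≤ r: |√(r₁/t)·J(r₁) − J(t)| ≤ C'. Then for all 0 < r₁ ≤ r: J(r₁) ≥ √(r/r₁) · (J(r) − C'') where C'' = C'·√(4/3)/(√(4/3) − 1) + C'. -/

import Mathlib

/-- Decay of the normalized jump (abstract form of Lemma `lemme7`): if the nonnegative
function `J` satisfies the one-step comparison
`|√(r₁/t) J(r₁) − J(t)| ≤ C'` whenever `r₁ ≤ t ≤ (4/3) r₁ ≤ r`, then for all `0 < r₁ ≤ r`,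
`J(r₁) ≥ √(r/r₁) (J(r) − C'')` where `C'' = C' √(4/3)/(√(4/3) − 1) + C'`. -/
theorem stmt_8 (J : ℝ → ℝ) (r C' : ℝ) (hr : 0 < r) (hC' : 0 ≤ C')
    (hnonneg : ∀ t, 0 < t → t ≤ r → 0 ≤ J t)
    (hstep : ∀ r₁ t, 0 < r₁ → r₁ ≤ t → t ≤ (4 / 3) * r₁ → (4 / 3) * r₁ ≤ r →
      |Real.sqrt (r₁ / t) * J r₁ - J t| ≤ C') :
    ∀ r₁, 0 < r₁ → r₁ ≤ r →
      Real.sqrt (r / r₁) *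
        (J r - (C' * Real.sqrt (4 / 3) / (Real.sqrt (4 / 3) - 1) + C')) ≤ J r₁ := by
  intro r₁ h1 h1r
  obtain ⟨a, ha⟩ : ∃ a, a = Real.sqrt (4 / 3) := ⟨_, rfl⟩
  have ha2 : a * a = 4 / 3 := by rw [ha]; exact Real.mul_self_sqrt (by norm_num)
  have ha1 : 1 < a := by
    rw [ha]; exact Real.lt_sqrt_of_sq_lt (by norm_num)
  rw [← ha]
  have G : ∀ x t, 0 < x → x ≤ t → t ≤ (4 / 3) * x → (4 / 3) * x ≤ r →
      |Real.sqrt x * J x - Real.sqrt t * J t| ≤ C' * Real.sqrt t := by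
    intro x t hx hxt ht hr'
    have h := hstep x t hx hxt ht hr'
    have ht0 : 0 < Real.sqrt t := Real.sqrt_pos.2 (by linarith)
    rw [Real.sqrt_div hx.le] at h
    have e : Real.sqrt x * J x - Real.sqrt t * J t
        = (Real.sqrt x / Real.sqrt t * J x - J t) * Real.sqrt t := by
      field_simp
    rw [e, abs_mul, abs_of_pos ht0]
    exact mul_le_mul_of_nonneg_right h ht0.le
  have hs43 : ∀ x, Real.sqrt (4 / 3 * x) = a * Real.sqrt x := by
    intro x; rw [ha]; exact Real.sqrt_mul (by norm_num) x
  obtain ⟨c, hc⟩ : ∃ c, c = a / (a - 1) := ⟨_, rfl⟩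
  have hca : c * (a - 1) = a := by
    rw [hc]; exact div_mul_cancel₀ _ (by linarith)
  have hc1 : 1 ≤ c := by
    by_contra hlt
    push Not at hlt
    nlinarith
  obtain ⟨s, hs⟩ : ∃ s, s = 3 / 4 * r := ⟨_, rfl⟩
  have hs0 : 0 < s := by rw [hs]; linarith
  have hsr : r = 4 / 3 * s := by rw [hs]; ring
  have hsqr : Real.sqrt r = a * Real.sqrt s := by rw [hsr, hs43]
  have key : ∀ n : ℕ, ∀ x, 0 < x → x ≤ s → s ≤ (4 / 3) ^ n * x →
      Real.sqrt s * J s - C' * (Real.sqrt s * (1 + c) - c * Real.sqrt x)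
        ≤ Real.sqrt x * J x := by
    have base : ∀ x, 0 < x → x ≤ s → s ≤ 4 / 3 * x →
      Real.sqrt s * J s - C' * (Real.sqrt s * (1 + c) - c * Real.sqrt x)
        ≤ Real.sqrt x * J x := by
      intro x hx hxs hsx
      have h := (abs_le.1 (G x s hx hxs hsx (by linarith))).1
      have hq : Real.sqrt x ≤ Real.sqrt s := Real.sqrt_le_sqrt hxs
      have : 0 ≤ C' * (c * (Real.sqrt s - Real.sqrt x)) :=
        mul_nonneg hC' (mul_nonneg (by linarith) (by linarith))
      linarith
    intro n
    induction n with
    | zero =>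
      intro x hx hxs h
      exact base x hx hxs (by simp at h; linarith)
    | succ n ih =>
      intro x hx hxs h
      rcases le_total s (4 / 3 * x) with h' | h'
      · exact base x hx hxs h'
      · have i := ih (4 / 3 * x) (by linarith) h' (by rw [pow_succ] at h; linarith)
        have g := (abs_le.1 (G x (4 / 3 * x) hx (by linarith) le_rfl (by linarith))).1
        have e : C' * Real.sqrt x * (c * (a - 1)) = C' * Real.sqrt x * a := by rw [hca]
        rw [hs43] at i g
        linarith
  have main : Real.sqrt r * (J r - (C' * c + C')) ≤ Real.sqrt r₁ * J r₁ := by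
    have g := (abs_le.1 (G s r hs0 (by linarith) hsr.le hsr.ge)).1
    have hcs : 0 ≤ C' * Real.sqrt s := mul_nonneg hC' (Real.sqrt_nonneg _)
    have hac : 1 + c ≤ a * c := by linarith
    have hmul := mul_le_mul_of_nonneg_left hac hcs
    rcases le_total r₁ s with h' | h'
    · obtain ⟨n, hn⟩ := pow_unbounded_of_one_lt (s / r₁) (by norm_num : (1 : ℝ) < 4 / 3)
      have k := key n r₁ h1 h' (by rw [div_lt_iff₀ h1] at hn; exact hn.le)
      have : 0 ≤ C' * (c * Real.sqrt r₁) :=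
        mul_nonneg hC' (mul_nonneg (by linarith) (Real.sqrt_nonneg _))
      have e : C' * c * Real.sqrt r = C' * Real.sqrt s * (a * c) := by rw [hsqr]; ring
      linarith
    · have g2 := (abs_le.1 (G s r₁ hs0 h' (by linarith) hsr.ge)).2
      have hq : C' * Real.sqrt r₁ ≤ C' * Real.sqrt r :=
        mul_le_mul_of_nonneg_left (Real.sqrt_le_sqrt h1r) hC'
      have : C' * Real.sqrt r * 1 ≤ C' * Real.sqrt r * c :=
        mul_le_mul_of_nonneg_left hc1 (mul_nonneg hC' (Real.sqrt_nonneg _))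
      linarith
  have hq : 0 < Real.sqrt r₁ := Real.sqrt_pos.2 h1
  rw [mul_div_assoc, ← hc, Real.sqrt_div hr.le, div_mul_eq_mul_div, div_le_iff₀ hq]
  linarith
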